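/- Let k be a field of characteristic different from 2, k'/k a finite Galois extension inside a fixed algebraic closure k̄, g ≥ 2, n = 2g+2, and f ∈ k'[X,Z] a binary form of degree n with n distinct roots in ℙ¹(k̄). Suppose that for every σ ∈ Gal(k'/k) there exist M_σ ∈ GL₂(k') and e_σ ∈ k'^* such that e_σ²·f(X,Z) = (σf)(M_σ·(X,Z)) (i.e. (M_σ,e_σ) is an isomorphism from the hyperelliptic curve y² = f to y² = σf), and that the cocycle relation M_{σ∘τ} = σ(M_τ)·M_σ holds for all σ, τ ∈ Gal(k'/k). Then there exist a binary form f̃ ∈ k[X,Z] of degree n with n distinct roots in ℙ¹(k̄), a matrix A ∈ GL₂(k̄) and a constant c ∈ k̄*, such that f̃(X,Z) = c·f(A·(X,Z)); in other words, the hyperelliptic curve y² = f(x) can be hyperelliptically defined over k. -/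

import Mathlib

open MvPolynomial

/-! The cocycle `M` is trivial by Hilbert 90 for `GL_n`: there is an invertible `B` over `k'` with
`σ(B) = M_σ B` for all `σ`. Substituting `B` into `e_σ² f = (σf) ∘ M_σ` then shows that every `σ`
merely multiplies `f ∘ B` by a scalar. Dividing `f ∘ B` by one of its nonzero coefficients
therefore makes all of its coefficients Galois invariant.

Hilbert 90 itself is proved by averaging: each row vector `w = ∑ τ, τ(y) M_τ` satisfies
`σ(w) M_σ = w`, and by Dedekind's independence of characters these vectors span, so that a matrix
`C` having a basis of such vectors as rows is invertible, and one takes `B = C⁻¹`. -/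

section LinearSubst

variable {ι R S : Type*} [Fintype ι] [CommSemiring R] [CommSemiring S]

/-- The substitution `p(x) ↦ p(A x)` of a square matrix `A` into a polynomial in several variables:
the `i`-th variable is replaced by the linear form given by the `i`-th row of `A`. -/
noncomputable def linearSubst (A : Matrix ι ι R) : MvPolynomial ι R →ₐ[R] MvPolynomial ι R :=
  bind₁ A.toMvPolynomial

theorem linearSubst_fin_two (A : Matrix (Fin 2) (Fin 2) R) :
    linearSubst A = bind₁ fun j ↦ C (A j 0) * X 0 + C (A j 1) * X 1 :=
  congrArg bind₁ <| funext fun j ↦ by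
    simp only [Matrix.toMvPolynomial, Fin.sum_univ_two, C_mul_X_eq_monomial]

theorem linearSubst_linearSubst (A B : Matrix ι ι R) (p : MvPolynomial ι R) :
    linearSubst B (linearSubst A p) = linearSubst (A * B) p := by
  simp only [linearSubst, bind₁_bind₁, ← Matrix.toMvPolynomial_mul]

theorem linearSubst_one [DecidableEq ι] : linearSubst (1 : Matrix ι ι R) = AlgHom.id R _ := by
  rw [linearSubst, Matrix.toMvPolynomial_one, bind₁_X_left]

theorem linearSubst_leftInverse [DecidableEq ι] {A B : Matrix ι ι R} (h : A * B = 1) :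
    Function.LeftInverse (linearSubst B) (linearSubst A) := fun p ↦ by
  rw [linearSubst_linearSubst, h, linearSubst_one, AlgHom.id_apply]

theorem map_linearSubst (φ : R →+* S) (A : Matrix ι ι R) (p : MvPolynomial ι R) :
    map φ (linearSubst A p) = linearSubst (A.map φ) (map φ p) := by
  simp only [linearSubst, map_bind₁, ← Matrix.toMvPolynomial_map]

theorem isHomogeneous_linearSubst (A : Matrix ι ι R) {p : MvPolynomial ι R} {n : ℕ}
    (hp : p.IsHomogeneous n) : (linearSubst A p).IsHomogeneous n :=
  one_mul n ▸ hp.aeval _ A.toMvPolynomial_isHomogeneous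

theorem squarefree_linearSubst [DecidableEq ι] {A : Matrix ι ι R} (hA : IsUnit A)
    {p : MvPolynomial ι R} (hp : Squarefree p) : Squarefree (linearSubst A p) := by
  obtain ⟨B, hAB, hBA⟩ := isUnit_iff_exists.mp hA
  intro q hq
  have hq' : linearSubst B q * linearSubst B q ∣ p := by
    simpa only [map_mul, linearSubst_leftInverse hAB p] using map_dvd (linearSubst B) hq
  simpa only [linearSubst_leftInverse hBA q] using (hp _ hq').map (linearSubst A)

end LinearSubst

section HilbertNinety

open Matrix

theorem exists_isUnit_of_span_range_eq_top {n κ L : Type*} [Fintype n] [DecidableEq n] [Field L]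
    {v : κ → n → L} (hv : Submodule.span L (Set.range v) = ⊤) :
    ∃ y : n → κ, IsUnit (of fun i ↦ v (y i)) := by
  obtain ⟨_, a, -, hspan, hli⟩ := exists_linearIndependent' L v
  let basis := Module.Basis.mk hli (hspan.trans hv).ge
  let e := (Pi.basisFun L n).indexEquiv basis
  exact ⟨a ∘ e, linearIndependent_rows_iff_isUnit.mp (hli.comp e e.injective)⟩

theorem linearIndependent_smul_of_faithfulSMul (G R : Type*) [Monoid G] [CommRing R] [IsDomain R]
    [MulSemiringAction G R] [FaithfulSMul G R] :
    LinearIndependent R fun (σ : G) (x : R) ↦ σ • x :=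
  (linearIndependent_monoidHom R R).comp
    (fun σ : G ↦ (MulSemiringAction.toRingHom G R σ : R →* R))
    fun _ _ h ↦ FaithfulSMul.eq_of_smul_eq_smul (DFunLike.congr_fun h)

section EntrywiseAction

variable {G R n : Type*} [Monoid G] [Semiring R] [MulSemiringAction G R] [Fintype n]

theorem smul_vecMul_distrib (σ : G) (v : n → R) (A : Matrix n n R) :
    σ • (v ᵥ* A) = (σ • v) ᵥ* (σ • A) :=
  funext fun i ↦ RingHom.map_vecMul (MulSemiringAction.toRingHom G R σ) A v i

theorem smul_matrix_mul_distrib (σ : G) (A B : Matrix n n R) : σ • (A * B) = σ • A * σ • B :=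
  Matrix.map_mul (f := MulSemiringAction.toRingHom G R σ)

end EntrywiseAction

variable {G R L n : Type*} [Group G] [Fintype n]

section Semiring

variable [Fintype G] [Semiring R] [MulSemiringAction G R]

/-- The Poincaré series `∑ τ, τ(y) M_τ` of a row vector `y`: the average that turns `y` into a
solution `w` of the equations `σ(w) M_σ = w`. -/
def poincareSeries (M : G → Matrix n n R) (y : n → R) : n → R :=
  ∑ τ, (τ • y) ᵥ* M τ

theorem smul_poincareSeries_vecMul {M : G → Matrix n n R}
    (hM : ∀ σ τ, M (σ * τ) = σ • M τ * M σ) (y : n → R) (σ : G) :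
    (σ • poincareSeries M y) ᵥ* M σ = poincareSeries M y :=
  calc (σ • poincareSeries M y) ᵥ* M σ
      = ∑ τ, ((σ * τ) • y) ᵥ* M (σ * τ) := by
        simp only [poincareSeries, Finset.smul_sum, sum_vecMul, smul_vecMul_distrib, vecMul_vecMul,
          hM, mul_smul]
    _ = poincareSeries M y := Equiv.sum_comp (Equiv.mulLeft σ) fun τ ↦ (τ • y) ᵥ* M τ

end Semiring

variable [Field L] [MulSemiringAction G L] [FaithfulSMul G L] [DecidableEq n]

theorem eq_zero_of_poincareSeries_dotProduct_eq_zero [Fintype G] {M : G → Matrix n n L}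
    (hM : IsUnit (M 1)) {u : n → L} (hu : ∀ y, poincareSeries M y ⬝ᵥ u = 0) : u = 0 := by
  have hsum (i : n) (x : L) : ∑ τ : G, (M τ *ᵥ u) i * τ • x = 0 :=
    calc ∑ τ : G, (M τ *ᵥ u) i * τ • x
        = poincareSeries M (Pi.single i x) ⬝ᵥ u := by
          simp only [poincareSeries, sum_dotProduct, ← dotProduct_mulVec, ← Pi.single_smul,
            single_dotProduct, mul_comm]
      _ = 0 := hu _
  have hMu (i : n) : (M 1 *ᵥ u) i = 0 :=
    Fintype.linearIndependent_iff.mp (linearIndependent_smul_of_faithfulSMul G L)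
      (fun τ ↦ (M τ *ᵥ u) i) (funext fun x ↦ by simpa using hsum i x) 1
  exact mulVec_injective_of_isUnit hM ((funext hMu).trans (mulVec_zero _).symm)

theorem span_range_poincareSeries_eq_top [Fintype G] {M : G → Matrix n n L} (hM : IsUnit (M 1)) :
    Submodule.span L (Set.range (poincareSeries M)) = ⊤ := by
  refine (span_flip_eq_top_iff_linearIndependent (f := flip (poincareSeries M))).mpr ?_
  refine Fintype.linearIndependent_iff.mpr fun u hu ↦ congrFun ?_
  refine eq_zero_of_poincareSeries_dotProduct_eq_zero hM fun y ↦ ?_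
  simpa [dotProduct, flip, mul_comm] using congrFun hu y

theorem exists_isUnit_smul_eq_mul_of_cocycle [Finite G] {M : G → Matrix n n L}
    (hM : IsUnit (M 1)) (hcoc : ∀ σ τ, M (σ * τ) = σ • M τ * M σ) :
    ∃ B : Matrix n n L, IsUnit B ∧ ∀ σ : G, σ • B = M σ * B := by
  have := Fintype.ofFinite G
  obtain ⟨y, hy⟩ := exists_isUnit_of_span_range_eq_top (span_range_poincareSeries_eq_top hM)
  set W : Matrix n n L := of fun i ↦ poincareSeries M (y i)
  have hW (σ : G) : σ • W * M σ = W :=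
    funext fun i ↦ smul_poincareSeries_vecMul hcoc (y i) σ
  obtain ⟨B, hWB, hBW⟩ := isUnit_iff_exists.mp hy
  refine ⟨B, isUnit_iff_exists.mpr ⟨W, hBW, hWB⟩, fun σ ↦ ?_⟩
  have hBW' : σ • B * σ • W = 1 := by
    rw [← smul_matrix_mul_distrib, hBW]
    exact Matrix.map_one _ (smul_zero σ) (smul_one σ)
  calc σ • B = σ • B * (W * B) := by rw [hWB, mul_one]
    _ = σ • B * (σ • W * M σ * B) := by rw [hW]
    _ = M σ * B := by rw [mul_assoc (σ • W), ← mul_assoc, hBW', one_mul]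

end HilbertNinety

section Descent

variable {k L : Type*} [Field k] [Field L] [Algebra k L] [IsGalois k L]

theorem exists_map_algebraMap_eq_C_mul {ι : Type*} {p : MvPolynomial ι L} (hp : p ≠ 0)
    {e : Gal(L/k) → L} (he : ∀ σ : Gal(L/k), map (σ : L →+* L) p = C (e σ) * p) :
    ∃ (q : MvPolynomial ι k) (c : L), c ≠ 0 ∧ map (algebraMap k L) q = C c * p := by
  obtain ⟨d, hd⟩ := ne_zero_iff.mp hp
  have hcoeff (σ : Gal(L/k)) (m : ι →₀ ℕ) : σ (coeff m p) = e σ * coeff m p := by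
    rw [← coeff_C_mul, ← he, coeff_map, RingHom.coe_coe]
  have hfixed (σ : Gal(L/k)) (m : ι →₀ ℕ) :
      σ ((coeff d p)⁻¹ * coeff m p) = (coeff d p)⁻¹ * coeff m p := by
    have hσd : e σ * coeff d p ≠ 0 := by rwa [← hcoeff, map_ne_zero]
    have heσ : e σ ≠ 0 := left_ne_zero_of_mul hσd
    rw [map_mul, map_inv₀, hcoeff, hcoeff]
    field_simp
  have hrange : C (coeff d p)⁻¹ * p ∈ Set.range (map (algebraMap k L)) := by
    refine mem_range_map_iff_coeffs_subset.mpr fun x hx ↦ ?_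
    obtain ⟨m, -, rfl⟩ := mem_coeffs_iff.mp hx
    rw [coeff_C_mul]
    exact (InfiniteGalois.mem_range_algebraMap_iff_fixed _).mpr (hfixed · m)
  obtain ⟨q, hq⟩ := hrange
  exact ⟨q, (coeff d p)⁻¹, inv_ne_zero hd, hq⟩

variable [FiniteDimensional k L] {ι : Type*} [Fintype ι] [DecidableEq ι]

theorem exists_map_algebraMap_eq_C_mul_linearSubst {f : MvPolynomial ι L} (hf : f ≠ 0)
    {M : Gal(L/k) → Matrix ι ι L} {e : Gal(L/k) → L} (hM : IsUnit (M 1))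
    (hiso : ∀ σ, C (e σ) * f = linearSubst (M σ) (map (σ : L →+* L) f))
    (hcoc : ∀ σ τ, M (σ * τ) = (M τ).map ⇑σ * M σ) :
    ∃ (q : MvPolynomial ι k) (A : Matrix ι ι L) (c : L), IsUnit A ∧ c ≠ 0 ∧
      map (algebraMap k L) q = C c * linearSubst A f := by
  obtain ⟨B, hB, hMB⟩ := exists_isUnit_smul_eq_mul_of_cocycle hM hcoc
  obtain ⟨B', hBB', -⟩ := isUnit_iff_exists.mp hB
  have hfB : linearSubst B f ≠ 0 :=
    (map_ne_zero_iff _ (linearSubst_leftInverse hBB').injective).mpr hf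
  have hfBσ (σ : Gal(L/k)) :
      map (σ : L →+* L) (linearSubst B f) = C (e σ) * linearSubst B f :=
    calc map (σ : L →+* L) (linearSubst B f)
        = linearSubst (σ • B) (map (σ : L →+* L) f) := map_linearSubst _ B f
      _ = linearSubst B (linearSubst (M σ) (map (σ : L →+* L) f)) := by
        rw [hMB, linearSubst_linearSubst]
      _ = C (e σ) * linearSubst B f := by
        rw [← hiso, map_mul, algHom_C, algebraMap_eq]
  obtain ⟨q, c, hc, hq⟩ := exists_map_algebraMap_eq_C_mul hfB hfBσ
  exact ⟨q, B, c, hB, hc, hq⟩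

end Descent

theorem statement14_general {k k' K ι : Type*} [Field k] [Field k'] [Field K]
    [Algebra k k'] [FiniteDimensional k k'] [IsGalois k k']
    [Algebra k' K] [Algebra k K] [IsScalarTower k k' K] [Fintype ι] [DecidableEq ι] {n : ℕ}
    {f : MvPolynomial ι k'} (hfh : f.IsHomogeneous n)
    (hfs : Squarefree (map (algebraMap k' K) f))
    {M : Gal(k'/k) → Matrix ι ι k'} {e : Gal(k'/k) → k'} (hM : IsUnit (M 1).det)
    (hiso : ∀ σ, C (e σ) * f = linearSubst (M σ) (map (σ : k' →+* k') f))
    (hcoc : ∀ σ τ, M (σ * τ) = (M τ).map ⇑σ * M σ) :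
    ∃ ft : MvPolynomial ι k, ft.IsHomogeneous n ∧ Squarefree (map (algebraMap k K) ft) ∧
      ∃ (A : Matrix ι ι K) (c : K), IsUnit A.det ∧ c ≠ 0 ∧
        map (algebraMap k K) ft = C c * linearSubst A (map (algebraMap k' K) f) := by
  have hf : f ≠ 0 := fun h ↦ hfs.ne_zero (by rw [h, map_zero])
  obtain ⟨ft, A, c, hA, hc, hft⟩ := exists_map_algebraMap_eq_C_mul_linearSubst hf
    ((Matrix.isUnit_iff_isUnit_det _).mpr hM) hiso hcoc
  have hAK : IsUnit (A.map (algebraMap k' K)) := hA.map (algebraMap k' K).mapMatrix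
  have hcK : IsUnit (algebraMap k' K c) := hc.isUnit.map _
  have hftK : map (algebraMap k K) ft =
      C (algebraMap k' K c) * linearSubst (A.map (algebraMap k' K)) (map (algebraMap k' K) f) := by
    rw [IsScalarTower.algebraMap_eq k k' K, ← map_map, hft, map_mul, map_C, map_linearSubst]
  refine ⟨ft, ?_, ?_, _, _, (Matrix.isUnit_iff_isUnit_det _).mp hAK, hcK.ne_zero, hftK⟩
  · refine .of_map (algebraMap k k').injective ?_
    exact hft ▸ (isHomogeneous_linearSubst A hfh).C_mul c
  · rw [hftK]
    exact (associated_unit_mul_left _ _ (hcK.map C)).squarefree_iff.mpr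
      (squarefree_linearSubst hAK hfs)

/-- Galois descent of hyperelliptic equations: let `k` be a field of characteristic `≠ 2`,
`k'/k` a finite Galois extension inside a fixed algebraic closure `K` of `k`, `g ≥ 2`,
`n = 2g+2`, and `f ∈ k'[X,Z]` a binary `n`-form with `n` distinct roots in `ℙ¹(K)` (i.e.
squarefree over `K`).  If for every `σ ∈ Gal(k'/k)` there are `M_σ ∈ GL₂(k')`, `e_σ ∈ k'^*`
with `e_σ²·f(X,Z) = (σf)(M_σ·(X,Z))` and the cocycle relation `M_{σ∘τ} = σ(M_τ)·M_σ` holds,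
then there is a binary `n`-form `f̃ ∈ k[X,Z]` with `n` distinct roots in `ℙ¹(K)`, a matrix
`A ∈ GL₂(K)` and `c ∈ K*` with `f̃(X,Z) = c·f(A·(X,Z))`: the hyperelliptic curve `y² = f(x)`
can be hyperelliptically defined over `k`. -/
theorem statement14 {k k' K : Type*} [Field k] [Field k'] [Field K]
    [Algebra k k'] [FiniteDimensional k k'] [IsGalois k k']
    [Algebra k' K] [Algebra k K] [IsScalarTower k k' K] [IsAlgClosure k K]
    (hchar : (2 : k) ≠ 0)
    (g : ℕ) (hg : 2 ≤ g)
    (f : MvPolynomial (Fin 2) k') (hfh : f.IsHomogeneous (2 * g + 2))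
    (hfs : Squarefree (MvPolynomial.map (algebraMap k' K) f))
    (M : (k' ≃ₐ[k] k') → Matrix (Fin 2) (Fin 2) k')
    (e : (k' ≃ₐ[k] k') → k')
    (hMdet : ∀ σ, IsUnit (M σ).det)
    (he : ∀ σ, e σ ≠ 0)
    (hiso : ∀ σ : k' ≃ₐ[k] k',
      C (e σ ^ 2) * f =
        bind₁ (fun j : Fin 2 => C (M σ j 0) * X 0 + C (M σ j 1) * X 1)
          (MvPolynomial.map σ.toAlgHom.toRingHom f))
    (hcoc : ∀ σ τ : k' ≃ₐ[k] k', M (σ * τ) = (M τ).map ⇑σ * M σ) :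
    ∃ ft : MvPolynomial (Fin 2) k, ft.IsHomogeneous (2 * g + 2) ∧
      Squarefree (MvPolynomial.map (algebraMap k K) ft) ∧
      ∃ (A : Matrix (Fin 2) (Fin 2) K) (c : K), IsUnit A.det ∧ c ≠ 0 ∧
        MvPolynomial.map (algebraMap k K) ft =
          C c * bind₁ (fun j : Fin 2 => C (A j 0) * X 0 + C (A j 1) * X 1)
            (MvPolynomial.map (algebraMap k' K) f) := by
  simp only [← linearSubst_fin_two] at hiso ⊢
  exact statement14_general hfh hfs (hMdet 1) hiso hcoc
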